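/- Squashed entanglement is continuous on the interior of the set of states: the function ρ^{AB} ↦ E_sq(ρ^{AB}), restricted to the faithful (i.e. positive definite, full-rank) states on H_A ⊗ H_B, is continuous with respect to the trace norm. -/

import Mathlib

open Matrix BigOperators Kronecker
open scoped Classical ComplexOrder

noncomputable section

/-- A (quantum) state: positive semidefinite matrix of trace 1. -/
def IsState {n : Type*} [Fintype n] (ρ : Matrix n n ℂ) : Prop :=
  ρ.PosSemidef ∧ ρ.trace = 1

/-- Von Neumann entropy (base 2), via the eigenvalues of a Hermitian matrix. -/
def vonNeumannEntropy {n : Type*} [Fintype n] (ρ : Matrix n n ℂ) : ℝ :=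
  if h : ρ.IsHermitian then ∑ i, -(h.eigenvalues i * Real.logb 2 (h.eigenvalues i)) else 0

/-- Partial trace over the second (right) factor. -/
def ptraceR {A B : Type*} [Fintype A] [Fintype B]
    (ρ : Matrix (A × B) (A × B) ℂ) : Matrix A A ℂ :=
  fun i j => ∑ b, ρ (i, b) (j, b)

/-- Partial trace over the first (left) factor. -/
def ptraceL {A B : Type*} [Fintype A] [Fintype B]
    (ρ : Matrix (A × B) (A × B) ℂ) : Matrix B B ℂ :=
  fun i j => ∑ a, ρ (a, i) (a, j)

variable {A B E : Type*} [Fintype A] [Fintype B] [Fintype E]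

/-- Marginal of a tripartite state on `A × E` (trace out `B`). -/
def margAE (ρ : Matrix (A × B × E) (A × B × E) ℂ) : Matrix (A × E) (A × E) ℂ :=
  fun x y => ∑ b, ρ (x.1, b, x.2) (y.1, b, y.2)

/-- Marginal of a tripartite state on `B × E` (trace out `A`). -/
def margBE (ρ : Matrix (A × B × E) (A × B × E) ℂ) : Matrix (B × E) (B × E) ℂ :=
  fun x y => ∑ a, ρ (a, x.1, x.2) (a, y.1, y.2)

/-- Marginal of a tripartite state on `E` (trace out `A` and `B`). -/
def margE (ρ : Matrix (A × B × E) (A × B × E) ℂ) : Matrix E E ℂ :=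
  fun x y => ∑ a, ∑ b, ρ (a, b, x) (a, b, y)

/-- Marginal of a tripartite state on `A × B` (trace out `E`). -/
def margAB (ρ : Matrix (A × B × E) (A × B × E) ℂ) : Matrix (A × B) (A × B) ℂ :=
  fun x y => ∑ e, ρ (x.1, x.2, e) (y.1, y.2, e)

/-- Quantum conditional mutual information `I(A;B|E) = S(AE)+S(BE)-S(ABE)-S(E)`. -/
def condMutualInfo (ρ : Matrix (A × B × E) (A × B × E) ℂ) : ℝ :=
  vonNeumannEntropy (margAE ρ) + vonNeumannEntropy (margBE ρ)
    - vonNeumannEntropy ρ - vonNeumannEntropy (margE ρ)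

/-- Squashed entanglement: infimum of `(1/2) I(A;B|E)` over all finite-dimensional
extensions of `ρ`. -/
def Esq {A B : Type*} [Fintype A] [Fintype B] (ρ : Matrix (A × B) (A × B) ℂ) : ℝ :=
  sInf { x : ℝ | ∃ (d : ℕ) (ρE : Matrix (A × B × Fin d) (A × B × Fin d) ℂ),
    IsState ρE ∧ margAB ρE = ρ ∧ x = (1 / 2) * condMutualInfo ρE }

/-- Outer product `|ψ⟩⟨ψ|`. -/
def outer {n : Type*} (ψ : n → ℂ) : Matrix n n ℂ :=
  Matrix.vecMulVec ψ (star ψ)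

/-- Trace norm of a Hermitian matrix: sum of the absolute values of its eigenvalues. -/
def traceNorm {n : Type*} [Fintype n] (X : Matrix n n ℂ) : ℝ :=
  if h : X.IsHermitian then ∑ i, |h.eigenvalues i| else 0

/-- Entanglement of formation: infimum of average entanglement entropy over all
finite pure-state ensembles for `ρ`. -/
def EoF {A B : Type*} [Fintype A] [Fintype B] (ρ : Matrix (A × B) (A × B) ℂ) : ℝ :=
  sInf { x : ℝ | ∃ (n : ℕ) (p : Fin n → ℝ) (ψ : Fin n → A × B → ℂ),
    (∀ k, 0 ≤ p k) ∧ (∑ k, p k) = 1 ∧ (∀ k, ∑ i, ‖ψ k i‖ ^ 2 = 1) ∧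
    (∑ k, (p k : ℂ) • outer (ψ k)) = ρ ∧
    x = ∑ k, p k * vonNeumannEntropy (ptraceR (outer (ψ k))) }

/-- The function `η` : `η(x) = -x log₂ x` for `x ≤ 1/4`, `1/2` otherwise. -/
def eta (x : ℝ) : ℝ := if x ≤ 1 / 4 then -(x * Real.logb 2 x) else 1 / 2

/-!
The conditional mutual information is a difference of conditional entropies,
`I(A;B|E) = S(A|E) - S(A|BE)`. For a state, `|S(A|E)| ≤ log₂ |A|`: the upper bound compares the
spectrum of the state with its diagonal in an eigenbasis of the `E`-marginal, and the lower bound is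
the upper bound for a complementary marginal of a purification. So `E_sq` is the infimum of a
bounded set, and `|E_sq| ≤ log₂ |A|`.

Conditional entropies are homogeneous and additive on direct sums, because the spectrum of a direct
sum is the union of the spectra. Given extensions of two states, their weighted direct sum along the
environment extends the mixture, hence `E_sq` is convex. A bounded convex function `f` is continuous
at a faithful state `ρ ≥ μ > 0`: a nearby state is `σ = (1 - t) ρ + t τ` with `τ` a state and `t` of
order `‖ρ - σ‖₁ / μ`, so `f σ - f ρ ≤ t (f τ - f ρ)`, and `ρ`, `σ` play symmetric roles.
-/

open Real (negMulLog)

section PosSemidef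

variable {m n : Type*}

open scoped MatrixOrder in
lemma exists_eq_mul_conjTranspose [Fintype n] {M : Matrix n n ℂ} (hM : M.PosSemidef) :
    ∃ V : Matrix n n ℂ, M = V * Vᴴ := by
  obtain ⟨B, rfl⟩ := CStarAlgebra.nonneg_iff_eq_star_mul_self.1 hM.nonneg
  exact ⟨Bᴴ, by rw [conjTranspose_conjTranspose, star_eq_conjTranspose]⟩

lemma posSemidef_fromBlocks [Finite m] [Finite n] {M : Matrix m m ℂ} {N : Matrix n n ℂ}
    (hM : M.PosSemidef) (hN : N.PosSemidef) : (fromBlocks M 0 0 N).PosSemidef := by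
  cases nonempty_fintype m
  cases nonempty_fintype n
  obtain ⟨V, rfl⟩ := exists_eq_mul_conjTranspose hM
  obtain ⟨W, rfl⟩ := exists_eq_mul_conjTranspose hN
  have h := posSemidef_self_mul_conjTranspose (fromBlocks V 0 0 W)
  simpa only [fromBlocks_conjTranspose, fromBlocks_multiply, conjTranspose_zero, Matrix.mul_zero,
    Matrix.zero_mul, add_zero, zero_add] using h

end PosSemidef

section Entropy

variable {m n : Type*} [Fintype m] [Fintype n]

lemma vonNeumannEntropy_eq_sum_negMulLog {M : Matrix n n ℂ} (hM : M.IsHermitian) :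
    vonNeumannEntropy M = (∑ i, negMulLog (hM.eigenvalues i)) / Real.log 2 := by
  simp only [vonNeumannEntropy, dif_pos hM, Real.logb, negMulLog, Finset.sum_div]
  exact Finset.sum_congr rfl fun i _ => by ring

lemma vonNeumannEntropy_eq_sum_roots [DecidableEq n] {M : Matrix n n ℂ} (hM : M.IsHermitian) :
    vonNeumannEntropy M = (M.charpoly.roots.map fun z => negMulLog z.re).sum / Real.log 2 := by
  rw [hM.roots_charpoly_eq_eigenvalues, Multiset.map_map, vonNeumannEntropy_eq_sum_negMulLog hM]
  congr!

lemma vonNeumannEntropy_mul_comm {V : Matrix m n ℂ} {W : Matrix n m ℂ}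
    (hVW : (V * W).IsHermitian) (hWV : (W * V).IsHermitian) :
    vonNeumannEntropy (V * W) = vonNeumannEntropy (W * V) := by
  have hroots := congrArg (fun p => (p.roots.map fun z : ℂ => negMulLog z.re).sum)
    (charpoly_mul_comm' V W)
  have hX (k : ℕ) {p : Polynomial ℂ} (hp : p.Monic) : Polynomial.X ^ k * p ≠ 0 :=
    ((Polynomial.monic_X_pow k).mul hp).ne_zero
  simp only [Polynomial.roots_mul (hX _ (charpoly_monic _)), Polynomial.roots_X_pow,
    Multiset.map_add, Multiset.sum_add, Multiset.map_nsmul, Multiset.map_singleton,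
    Multiset.sum_nsmul, Multiset.sum_singleton, Complex.zero_re, Real.negMulLog_zero, smul_zero,
    zero_add] at hroots
  rw [vonNeumannEntropy_eq_sum_roots hVW, vonNeumannEntropy_eq_sum_roots hWV, hroots]

lemma vonNeumannEntropy_conj [DecidableEq n] {M : Matrix n n ℂ} (hM : M.IsHermitian)
    {U : Matrix n m ℂ} (hU : U * Uᴴ = 1) :
    vonNeumannEntropy (Uᴴ * M * U) = vonNeumannEntropy M := by
  have hUM : U * (Uᴴ * M) = M := by rw [← Matrix.mul_assoc, hU, Matrix.one_mul]
  rw [vonNeumannEntropy_mul_comm (isHermitian_conjTranspose_mul_mul U hM) (by rwa [hUM]), hUM]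

lemma vonNeumannEntropy_submatrix_equiv {M : Matrix n n ℂ} (hM : M.IsHermitian) (e : m ≃ n) :
    vonNeumannEntropy (M.submatrix e e) = vonNeumannEntropy M := by
  rw [vonNeumannEntropy_eq_sum_roots (hM.submatrix e), vonNeumannEntropy_eq_sum_roots hM,
    ← charpoly_reindex e.symm M, reindex_apply, Equiv.symm_symm]

lemma vonNeumannEntropy_fromBlocks {M : Matrix m m ℂ} {N : Matrix n n ℂ} (hM : M.IsHermitian)
    (hN : N.IsHermitian) :
    vonNeumannEntropy (fromBlocks M 0 0 N) = vonNeumannEntropy M + vonNeumannEntropy N := by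
  rw [vonNeumannEntropy_eq_sum_roots hM, vonNeumannEntropy_eq_sum_roots hN,
    vonNeumannEntropy_eq_sum_roots (hM.fromBlocks (conjTranspose_zero ..) hN),
    charpoly_fromBlocks_zero₁₂,
    Polynomial.roots_mul (mul_ne_zero (charpoly_monic _).ne_zero (charpoly_monic _).ne_zero),
    Multiset.map_add, Multiset.sum_add, add_div]

lemma vonNeumannEntropy_cfc {M : Matrix n n ℂ} (hM : M.IsHermitian) (f : ℝ → ℝ) :
    vonNeumannEntropy (cfc f M) = (∑ i, negMulLog (f (hM.eigenvalues i))) / Real.log 2 := by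
  have hroots : (cfc f M).charpoly.roots =
      Finset.univ.val.map fun i => (f (hM.eigenvalues i) : ℂ) := by
    rw [hM.charpoly_cfc_eq, Polynomial.roots_prod _ _
      (Finset.prod_ne_zero_iff.2 fun i _ => Polynomial.X_sub_C_ne_zero _)]
    simp only [Polynomial.roots_X_sub_C, Multiset.bind_singleton]
    rfl
  rw [vonNeumannEntropy_eq_sum_roots (cfc_predicate f M), hroots, Multiset.map_map]
  rfl

lemma sum_eigenvalues_eq_re_trace {M : Matrix n n ℂ} (hM : M.IsHermitian) :
    ∑ i, hM.eigenvalues i = M.trace.re := by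
  rw [hM.trace_eq_sum_eigenvalues, Complex.re_sum]
  rfl

lemma vonNeumannEntropy_smul {M : Matrix n n ℂ} (hM : M.IsHermitian) (t : ℝ) :
    vonNeumannEntropy (t • M) =
      t * vonNeumannEntropy M + M.trace.re * negMulLog t / Real.log 2 := by
  rw [← cfc_const_mul_id t M hM.isSelfAdjoint, vonNeumannEntropy_cfc hM,
    vonNeumannEntropy_eq_sum_negMulLog hM]
  simp only [Real.negMulLog_mul, Finset.sum_add_distrib, ← Finset.mul_sum, ← Finset.sum_mul,
    sum_eigenvalues_eq_re_trace hM]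
  ring

omit [Fintype m] in
lemma sum_normSq_row_of_mul_conjTranspose {U : Matrix m n ℂ} [DecidableEq m] (hU : U * Uᴴ = 1)
    (i : m) : ∑ k, Complex.normSq (U i k) = 1 := by
  have h := congrFun (congrFun hU i) i
  simp only [mul_apply, conjTranspose_apply, Complex.star_def, Complex.mul_conj, one_apply_eq] at h
  exact_mod_cast h

lemma re_diag_eq_sum_eigenvalues {M : Matrix n n ℂ} (hM : M.IsHermitian) (i : n) :
    (M i i).re = ∑ k, Complex.normSq ((hM.eigenvectorUnitary : Matrix n n ℂ) i k) *
      hM.eigenvalues k := by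
  conv_lhs => rw [hM.spectral_theorem, Unitary.conjStarAlgAut_apply, mul_apply, Complex.re_sum]
  refine Finset.sum_congr rfl fun k _ => ?_
  rw [mul_diagonal, star_apply, mul_right_comm, Complex.star_def, Complex.mul_conj]
  exact Complex.re_ofReal_mul ..

-- The diagonal is the image of the spectrum under the doubly stochastic matrix `|U i k|²`.
lemma vonNeumannEntropy_le_diag {M : Matrix n n ℂ} (hM : M.PosSemidef) :
    vonNeumannEntropy M ≤ (∑ i, negMulLog (M i i).re) / Real.log 2 := by
  have hH := hM.isHermitian
  set U : Matrix n n ℂ := ↑hH.eigenvectorUnitary with hU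
  have hrow (i) : ∑ k, Complex.normSq (U i k) = 1 :=
    sum_normSq_row_of_mul_conjTranspose (Unitary.coe_mul_star_self hH.eigenvectorUnitary) i
  have hcol (k) : ∑ i, Complex.normSq (U i k) = 1 := by
    have h := sum_normSq_row_of_mul_conjTranspose (U := Uᴴ) (i := k) (by
      rw [conjTranspose_conjTranspose]; exact Unitary.coe_star_mul_self hH.eigenvectorUnitary)
    simpa only [conjTranspose_apply, Complex.star_def, Complex.normSq_conj] using h
  rw [vonNeumannEntropy_eq_sum_negMulLog hH]
  refine div_le_div_of_nonneg_right ?_ (Real.log_nonneg one_le_two)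
  calc ∑ k, negMulLog (hH.eigenvalues k)
      = ∑ k, ∑ i, Complex.normSq (U i k) * negMulLog (hH.eigenvalues k) := by
        simp only [← Finset.sum_mul, hcol, one_mul]
    _ = ∑ i, ∑ k, Complex.normSq (U i k) * negMulLog (hH.eigenvalues k) := Finset.sum_comm
    _ ≤ ∑ i, negMulLog (∑ k, Complex.normSq (U i k) * hH.eigenvalues k) :=
        Finset.sum_le_sum fun i _ => Real.concaveOn_negMulLog.le_map_sum
          (fun k _ => Complex.normSq_nonneg _) (hrow i) fun k _ => hM.eigenvalues_nonneg k
    _ = ∑ i, negMulLog (M i i).re := by simp only [re_diag_eq_sum_eigenvalues hH, hU]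

lemma sum_negMulLog_le {ι : Type*} [Fintype ι] {p : ι → ℝ} (hp : ∀ i, 0 ≤ p i) :
    ∑ i, negMulLog (p i) ≤ negMulLog (∑ i, p i) + (∑ i, p i) * Real.log (Fintype.card ι) := by
  cases isEmpty_or_nonempty ι
  · simp
  set N : ℝ := ↑(Fintype.card ι) with hN
  have hN0 : 0 < N := Nat.cast_pos.2 Fintype.card_pos
  have jensen : ∑ i, N⁻¹ * negMulLog (p i) ≤ negMulLog (∑ i, N⁻¹ * p i) :=
    Real.concaveOn_negMulLog.le_map_sum (fun i _ => inv_nonneg.2 hN0.le)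
      (by simp [← hN, hN0.ne']) fun i _ => hp i
  rw [← Finset.mul_sum, ← Finset.mul_sum, Real.negMulLog_mul, inv_mul_le_iff₀ hN0] at jensen
  refine jensen.trans_eq ?_
  rw [negMulLog, Real.log_inv]
  field_simp
  ring

end Entropy

section ConditionalEntropy

variable {X E F : Type*}

/-- The direct sum of operators on `X × E` and `X × F`, as a block diagonal operator on
`X × (E ⊕ F)`: the environment records which summand one is in. -/
def envSum (M : Matrix (X × E) (X × E) ℂ) (N : Matrix (X × F) (X × F) ℂ) :
    Matrix (X × (E ⊕ F)) (X × (E ⊕ F)) ℂ :=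
  (fromBlocks M 0 0 N).submatrix (Equiv.prodSumDistrib X E F) (Equiv.prodSumDistrib X E F)

lemma posSemidef_envSum [Finite X] [Finite E] [Finite F] {M : Matrix (X × E) (X × E) ℂ}
    {N : Matrix (X × F) (X × F) ℂ} (hM : M.PosSemidef) (hN : N.PosSemidef) :
    (envSum M N).PosSemidef :=
  (posSemidef_fromBlocks hM hN).submatrix _

variable [Fintype X] [Fintype E] [Fintype F]

lemma ptraceL_eq_sum_submatrix (M : Matrix (X × E) (X × E) ℂ) :
    ptraceL M = ∑ x, M.submatrix (Prod.mk x) (Prod.mk x) := by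
  ext
  simp only [ptraceL, Matrix.sum_apply, submatrix_apply]

lemma isHermitian_ptraceL {M : Matrix (X × E) (X × E) ℂ} (hM : M.IsHermitian) :
    (ptraceL M).IsHermitian := by
  rw [ptraceL_eq_sum_submatrix]
  exact isSelfAdjoint_sum _ fun x _ => (hM.submatrix _).isSelfAdjoint

lemma trace_ptraceL (M : Matrix (X × E) (X × E) ℂ) : (ptraceL M).trace = M.trace := by
  simp only [trace, diag, ptraceL, Fintype.sum_prod_type]
  exact Finset.sum_comm

lemma ptraceL_conj_one_kronecker (M : Matrix (X × E) (X × E) ℂ) (U : Matrix E F ℂ) :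
    ptraceL (((1 : Matrix X X ℂ) ⊗ₖ U)ᴴ * M * ((1 : Matrix X X ℂ) ⊗ₖ U)) =
      Uᴴ * ptraceL M * U := by
  rw [ptraceL_eq_sum_submatrix, ptraceL_eq_sum_submatrix, Matrix.mul_sum, Matrix.sum_mul]
  refine Finset.sum_congr rfl fun x _ => ?_
  ext
  simp [mul_apply, Fintype.sum_prod_type, one_apply, apply_ite (starRingEnd ℂ), ite_mul,
    Finset.sum_ite_irrel]

/-- The conditional entropy `S(X|E) = S(XE) - S(E)`. -/
def condEntropy (M : Matrix (X × E) (X × E) ℂ) : ℝ :=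
  vonNeumannEntropy M - vonNeumannEntropy (ptraceL M)

lemma ptraceL_conj_eigenvectorUnitary {M : Matrix (X × E) (X × E) ℂ}
    (hE : (ptraceL M).IsHermitian) :
    ptraceL (((1 : Matrix X X ℂ) ⊗ₖ (hE.eigenvectorUnitary : Matrix E E ℂ))ᴴ * M *
      ((1 : Matrix X X ℂ) ⊗ₖ (hE.eigenvectorUnitary : Matrix E E ℂ))) =
        diagonal fun e => (hE.eigenvalues e : ℂ) := by
  have h := hE.conjStarAlgAut_star_eigenvectorUnitary
  rw [Unitary.conjStarAlgAut_star_apply] at h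
  rw [ptraceL_conj_one_kronecker]
  exact h

-- In an eigenbasis of `ptraceL M` the diagonal of `M` refines the spectrum of `ptraceL M`, each
-- eigenvalue being split into `card X` parts.
lemma condEntropy_le {M : Matrix (X × E) (X × E) ℂ} (hM : M.PosSemidef) :
    condEntropy M ≤ M.trace.re * Real.logb 2 (Fintype.card X) := by
  have hE := isHermitian_ptraceL hM.isHermitian
  set U : Matrix E E ℂ := ↑hE.eigenvectorUnitary
  set W : Matrix (X × E) (X × E) ℂ := (1 : Matrix X X ℂ) ⊗ₖ U with hW
  have hUU : U * Uᴴ = 1 := Unitary.coe_mul_star_self _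
  have hWW : W * Wᴴ = 1 := by
    rw [hW, conjTranspose_kronecker, ← mul_kronecker_mul, conjTranspose_one, Matrix.one_mul, hUU]
    exact one_kronecker_one
  have hM' : (Wᴴ * M * W).PosSemidef := hM.conjTranspose_mul_mul_same W
  set p : E → X → ℝ := fun e x => ((Wᴴ * M * W) (x, e) (x, e)).re with hp
  have hsum (e : E) : ∑ x, p e x = hE.eigenvalues e := by
    have h := congrFun (congrFun (ptraceL_conj_eigenvectorUnitary hE) e) e
    rw [diagonal_apply_eq] at h
    rw [hp, ← Complex.re_sum]
    exact congrArg Complex.re h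
  have hcond : ∑ e, ∑ x, negMulLog (p e x) ≤
      ∑ e, negMulLog (hE.eigenvalues e) + M.trace.re * Real.log (Fintype.card X) := by
    rw [← trace_ptraceL M, ← sum_eigenvalues_eq_re_trace hE, Finset.sum_mul,
      ← Finset.sum_add_distrib]
    refine Finset.sum_le_sum fun e _ => ?_
    rw [← hsum]
    exact sum_negMulLog_le fun x => (Complex.nonneg_iff.1 hM'.diag_nonneg).1
  have hdiag := vonNeumannEntropy_le_diag hM'
  rw [vonNeumannEntropy_conj hM.isHermitian hWW, Fintype.sum_prod_type_right] at hdiag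
  rw [condEntropy, vonNeumannEntropy_eq_sum_negMulLog hE, sub_le_iff_le_add', Real.logb,
    mul_div_assoc', ← add_div]
  exact hdiag.trans (div_le_div_of_nonneg_right hcond (Real.log_nonneg one_le_two))

-- Duality: if `W` purifies `M = V Vᴴ` then `S(E)` and `S(XE)` are the entropies of the
-- complementary systems of the purification.
lemma exists_condEntropy_eq_neg {M : Matrix (X × E) (X × E) ℂ} (hM : M.PosSemidef) :
    ∃ G : Matrix (X × X × E) (X × X × E) ℂ,
      G.PosSemidef ∧ G.trace = M.trace ∧ condEntropy G = -condEntropy M := by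
  obtain ⟨V, rfl⟩ := exists_eq_mul_conjTranspose hM
  let W : Matrix E (X × X × E) ℂ := of fun e p => V (p.1, e) p.2
  have hWW : W * Wᴴ = ptraceL (V * Vᴴ) := by
    ext e e'
    simp only [ptraceL, mul_apply, conjTranspose_apply, Fintype.sum_prod_type (α₁ := X), W,
      of_apply]
  have hG : ptraceL (Wᴴ * W) = Vᴴ * V := by
    ext e e'
    simp only [ptraceL, mul_apply, conjTranspose_apply,
      Fintype.sum_prod_type (α₁ := X) (α₂ := E), W, of_apply]
  refine ⟨Wᴴ * W, posSemidef_conjTranspose_mul_self W, ?_, ?_⟩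
  · rw [trace_mul_comm, hWW, trace_ptraceL]
  · rw [condEntropy, condEntropy, hG, ← hWW, vonNeumannEntropy_mul_comm
      (isHermitian_conjTranspose_mul_self W) (isHermitian_mul_conjTranspose_self W),
      vonNeumannEntropy_mul_comm
      (isHermitian_conjTranspose_mul_self V) (isHermitian_mul_conjTranspose_self V), neg_sub]

lemma abs_condEntropy_le {M : Matrix (X × E) (X × E) ℂ} (hM : M.PosSemidef) :
    |condEntropy M| ≤ M.trace.re * Real.logb 2 (Fintype.card X) := by
  obtain ⟨G, hG, htr, hneg⟩ := exists_condEntropy_eq_neg hM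
  refine abs_le'.2 ⟨condEntropy_le hM, ?_⟩
  rw [← hneg, ← htr]
  exact condEntropy_le hG

lemma condEntropy_smul {M : Matrix (X × E) (X × E) ℂ} (hM : M.IsHermitian) (t : ℝ) :
    condEntropy (t • M) = t * condEntropy M := by
  have hsmul : ptraceL (t • M) = t • ptraceL M := by
    simp only [ptraceL_eq_sum_submatrix, submatrix_smul, Pi.smul_apply, Finset.smul_sum]
  rw [condEntropy, condEntropy, hsmul, vonNeumannEntropy_smul hM,
    vonNeumannEntropy_smul (isHermitian_ptraceL hM), trace_ptraceL]
  ring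

lemma condEntropy_submatrix {M : Matrix (X × E) (X × E) ℂ} (hM : M.IsHermitian) (e : F ≃ E) :
    condEntropy (M.submatrix ((Equiv.refl X).prodCongr e) ((Equiv.refl X).prodCongr e)) =
      condEntropy M := by
  have hptrace : ptraceL
      (M.submatrix ((Equiv.refl X).prodCongr e) ((Equiv.refl X).prodCongr e)) =
        (ptraceL M).submatrix e e := rfl
  rw [condEntropy, condEntropy, hptrace, vonNeumannEntropy_submatrix_equiv hM,
    vonNeumannEntropy_submatrix_equiv (isHermitian_ptraceL hM)]

lemma ptraceL_envSum (M : Matrix (X × E) (X × E) ℂ) (N : Matrix (X × F) (X × F) ℂ) :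
    ptraceL (envSum M N) = fromBlocks (ptraceL M) 0 0 (ptraceL N) := by
  ext (e₁ | f₁) (e₂ | f₂) <;> simp [ptraceL, envSum]

lemma condEntropy_envSum {M : Matrix (X × E) (X × E) ℂ} {N : Matrix (X × F) (X × F) ℂ}
    (hM : M.IsHermitian) (hN : N.IsHermitian) :
    condEntropy (envSum M N) = condEntropy M + condEntropy N := by
  rw [condEntropy, ptraceL_envSum, envSum,
    vonNeumannEntropy_submatrix_equiv (hM.fromBlocks (conjTranspose_zero ..) hN),
    vonNeumannEntropy_fromBlocks hM hN,
    vonNeumannEntropy_fromBlocks (isHermitian_ptraceL hM) (isHermitian_ptraceL hN),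
    condEntropy, condEntropy]
  ring

end ConditionalEntropy

section Extension

variable {A B E F : Type*}

lemma margAE_eq_sum_submatrix [Fintype B] (R : Matrix (A × B × E) (A × B × E) ℂ) :
    margAE R = ∑ b, R.submatrix (fun x => (x.1, b, x.2)) (fun x => (x.1, b, x.2)) := by
  ext
  simp only [margAE, Matrix.sum_apply, submatrix_apply]

lemma isHermitian_margAE [Fintype B] {R : Matrix (A × B × E) (A × B × E) ℂ}
    (hR : R.IsHermitian) : (margAE R).IsHermitian := by
  rw [margAE_eq_sum_submatrix]
  exact isSelfAdjoint_sum _ fun b _ => (hR.submatrix _).isSelfAdjoint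

lemma posSemidef_margAE [Fintype B] {R : Matrix (A × B × E) (A × B × E) ℂ}
    (hR : R.PosSemidef) : (margAE R).PosSemidef := by
  rw [margAE_eq_sum_submatrix]
  exact posSemidef_sum _ fun b _ => hR.submatrix _

lemma margAE_smul [Fintype B] (t : ℝ) (R : Matrix (A × B × E) (A × B × E) ℂ) :
    margAE (t • R) = t • margAE R := by
  ext
  simp only [margAE, Matrix.smul_apply, Finset.smul_sum]

lemma margAB_smul [Fintype E] (t : ℝ) (R : Matrix (A × B × E) (A × B × E) ℂ) :
    margAB (t • R) = t • margAB R := by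
  ext
  simp only [margAB, Matrix.smul_apply, Finset.smul_sum]

/-- The direct sum of operators on `A × B × E` and `A × B × F`, as a block diagonal operator on
`A × B × (E ⊕ F)`; it is `envSum` up to distributing `B × (E ⊕ F)` over the sum. -/
def extSum (R : Matrix (A × B × E) (A × B × E) ℂ) (T : Matrix (A × B × F) (A × B × F) ℂ) :
    Matrix (A × B × (E ⊕ F)) (A × B × (E ⊕ F)) ℂ :=
  (envSum R T).submatrix ((Equiv.refl A).prodCongr (Equiv.prodSumDistrib B E F))
    ((Equiv.refl A).prodCongr (Equiv.prodSumDistrib B E F))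

lemma posSemidef_extSum [Finite A] [Finite B] [Finite E] [Finite F]
    {R : Matrix (A × B × E) (A × B × E) ℂ} {T : Matrix (A × B × F) (A × B × F) ℂ}
    (hR : R.PosSemidef) (hT : T.PosSemidef) :
    (extSum R T).PosSemidef :=
  (posSemidef_envSum hR hT).submatrix _

lemma margAE_extSum [Fintype B] (R : Matrix (A × B × E) (A × B × E) ℂ)
    (T : Matrix (A × B × F) (A × B × F) ℂ) :
    margAE (extSum R T) = envSum (margAE R) (margAE T) := by
  ext ⟨a₁, e₁ | f₁⟩ ⟨a₂, e₂ | f₂⟩ <;> simp [margAE, extSum, envSum]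

lemma margAB_extSum [Fintype E] [Fintype F] (R : Matrix (A × B × E) (A × B × E) ℂ)
    (T : Matrix (A × B × F) (A × B × F) ℂ) :
    margAB (extSum R T) = margAB R + margAB T := by
  ext
  simp [margAB, extSum, envSum]

variable [Fintype A] [Fintype B] [Fintype E] [Fintype F]

lemma trace_margAE (R : Matrix (A × B × E) (A × B × E) ℂ) : (margAE R).trace = R.trace := by
  simp only [trace, diag, margAE, Fintype.sum_prod_type]
  exact Finset.sum_congr rfl fun a _ => Finset.sum_comm

lemma trace_margAB (R : Matrix (A × B × E) (A × B × E) ℂ) : (margAB R).trace = R.trace := by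
  simp only [trace, diag, margAB, Fintype.sum_prod_type]

lemma condMutualInfo_eq_condEntropy_sub (R : Matrix (A × B × E) (A × B × E) ℂ) :
    condMutualInfo R = condEntropy (margAE R) - condEntropy R := by
  have hBE : margBE R = ptraceL R := rfl
  have hE : margE R = ptraceL (margAE R) := rfl
  rw [condMutualInfo, condEntropy, condEntropy, hBE, hE]
  ring

lemma abs_condMutualInfo_le {R : Matrix (A × B × E) (A × B × E) ℂ} (hR : R.PosSemidef) :
    |condMutualInfo R| ≤ 2 * (R.trace.re * Real.logb 2 (Fintype.card A)) := by
  have hAE := abs_condEntropy_le (posSemidef_margAE hR)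
  rw [trace_margAE] at hAE
  rw [condMutualInfo_eq_condEntropy_sub, two_mul]
  exact (abs_sub _ _).trans (add_le_add hAE (abs_condEntropy_le hR))

lemma condMutualInfo_smul {R : Matrix (A × B × E) (A × B × E) ℂ} (hR : R.IsHermitian) (t : ℝ) :
    condMutualInfo (t • R) = t * condMutualInfo R := by
  rw [condMutualInfo_eq_condEntropy_sub, condMutualInfo_eq_condEntropy_sub, margAE_smul,
    condEntropy_smul (isHermitian_margAE hR), condEntropy_smul hR, mul_sub]

lemma condMutualInfo_extSum {R : Matrix (A × B × E) (A × B × E) ℂ}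
    {T : Matrix (A × B × F) (A × B × F) ℂ} (hR : R.PosSemidef) (hT : T.PosSemidef) :
    condMutualInfo (extSum R T) = condMutualInfo R + condMutualInfo T := by
  rw [condMutualInfo_eq_condEntropy_sub, margAE_extSum,
    condEntropy_envSum (isHermitian_margAE hR.isHermitian) (isHermitian_margAE hT.isHermitian),
    extSum, condEntropy_submatrix (posSemidef_envSum hR hT).isHermitian,
    condEntropy_envSum hR.isHermitian hT.isHermitian, condMutualInfo_eq_condEntropy_sub,
    condMutualInfo_eq_condEntropy_sub]
  ring

/-- `R` is an extension of the state `ρ`: a state on `A × B × E` with marginal `ρ` on `A × B`. -/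
def IsExtension (R : Matrix (A × B × E) (A × B × E) ℂ) (ρ : Matrix (A × B) (A × B) ℂ) : Prop :=
  IsState R ∧ margAB R = ρ

lemma IsExtension.abs_half_condMutualInfo_le {R : Matrix (A × B × E) (A × B × E) ℂ}
    {ρ : Matrix (A × B) (A × B) ℂ} (h : IsExtension R ρ) :
    |1 / 2 * condMutualInfo R| ≤ Real.logb 2 (Fintype.card A) := by
  have hR := abs_condMutualInfo_le h.1.1
  rw [h.1.2, Complex.one_re, one_mul] at hR
  rw [abs_mul, abs_of_pos (one_half_pos (α := ℝ))]
  linarith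

lemma IsExtension.convexCombination {R : Matrix (A × B × E) (A × B × E) ℂ}
    {T : Matrix (A × B × F) (A × B × F) ℂ} {ρ σ : Matrix (A × B) (A × B) ℂ}
    (hR : IsExtension R ρ) (hT : IsExtension T σ) {s t : ℝ} (hs : 0 ≤ s) (ht : 0 ≤ t)
    (hst : s + t = 1) : IsExtension (extSum (s • R) (t • T)) (s • ρ + t • σ) := by
  have hmarg : margAB (extSum (s • R) (t • T)) = s • ρ + t • σ := by
    rw [margAB_extSum, margAB_smul, margAB_smul, hR.2, hT.2]
  refine ⟨⟨posSemidef_extSum (hR.1.1.smul hs) (hT.1.1.smul ht), ?_⟩, hmarg⟩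
  rw [← trace_margAB, margAB_extSum, trace_add, trace_margAB, trace_margAB, trace_smul,
    trace_smul, hR.1.2, hT.1.2, ← add_smul, hst, one_smul]

lemma IsExtension.submatrix {R : Matrix (A × B × E) (A × B × E) ℂ} {ρ : Matrix (A × B) (A × B) ℂ}
    (h : IsExtension R ρ) (e : F ≃ E) :
    IsExtension (R.submatrix ((Equiv.refl A).prodCongr ((Equiv.refl B).prodCongr e))
      ((Equiv.refl A).prodCongr ((Equiv.refl B).prodCongr e))) ρ := by
  refine ⟨⟨h.1.1.submatrix _, ?_⟩, ?_⟩
  · exact (Equiv.sum_comp _ fun x => R x x).trans h.1.2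
  · rw [← h.2]
    ext x y
    exact Equiv.sum_comp e fun k => R (x.1, x.2, k) (y.1, y.2, k)

lemma condMutualInfo_submatrix {R : Matrix (A × B × E) (A × B × E) ℂ} (hR : R.IsHermitian)
    (e : F ≃ E) :
    condMutualInfo (R.submatrix ((Equiv.refl A).prodCongr ((Equiv.refl B).prodCongr e))
      ((Equiv.refl A).prodCongr ((Equiv.refl B).prodCongr e))) = condMutualInfo R := by
  have hAE : margAE (R.submatrix ((Equiv.refl A).prodCongr ((Equiv.refl B).prodCongr e))
      ((Equiv.refl A).prodCongr ((Equiv.refl B).prodCongr e))) =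
        (margAE R).submatrix ((Equiv.refl A).prodCongr e) ((Equiv.refl A).prodCongr e) := rfl
  rw [condMutualInfo_eq_condEntropy_sub, hAE, condEntropy_submatrix (isHermitian_margAE hR),
    condEntropy_submatrix hR, condMutualInfo_eq_condEntropy_sub]

lemma isExtension_fin_one {ρ : Matrix (A × B) (A × B) ℂ} (hρ : IsState ρ) :
    IsExtension (ρ.submatrix (fun x : A × B × Fin 1 => (x.1, x.2.1)) fun x => (x.1, x.2.1)) ρ := by
  have hmarg : margAB
      (ρ.submatrix (fun x : A × B × Fin 1 => (x.1, x.2.1)) fun x => (x.1, x.2.1)) = ρ := by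
    ext
    simp [margAB]
  exact ⟨⟨hρ.1.submatrix _, by rw [← trace_margAB, hmarg, hρ.2]⟩, hmarg⟩

end Extension

section SquashedEntanglement

variable {A B E : Type*} [Fintype A] [Fintype B] [Fintype E] {ρ : Matrix (A × B) (A × B) ℂ}

lemma IsExtension.Esq_le {R : Matrix (A × B × E) (A × B × E) ℂ} (h : IsExtension R ρ) :
    Esq ρ ≤ 1 / 2 * condMutualInfo R := by
  let e := (Fintype.equivFin E).symm
  refine csInf_le ⟨-Real.logb 2 (Fintype.card A), ?_⟩
    ⟨_, _, (h.submatrix e).1, (h.submatrix e).2, ?_⟩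
  · rintro _ ⟨d, T, hT, hTρ, rfl⟩
    exact (abs_le.1 (IsExtension.abs_half_condMutualInfo_le ⟨hT, hTρ⟩)).1
  · rw [condMutualInfo_submatrix h.1.1.isHermitian]

lemma exists_isExtension_lt (hρ : IsState ρ) {x : ℝ} (hx : Esq ρ < x) :
    ∃ (d : ℕ) (R : Matrix (A × B × Fin d) (A × B × Fin d) ℂ),
      IsExtension R ρ ∧ 1 / 2 * condMutualInfo R < x := by
  have h := isExtension_fin_one hρ
  obtain ⟨_, ⟨d, R, hR, hRρ, rfl⟩, hlt⟩ := exists_lt_of_csInf_lt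
    (by exact ⟨_, _, _, h.1, h.2, rfl⟩) hx
  exact ⟨d, R, ⟨hR, hRρ⟩, hlt⟩

lemma abs_Esq_le (hρ : IsState ρ) : |Esq ρ| ≤ Real.logb 2 (Fintype.card A) := by
  have h := isExtension_fin_one hρ
  refine abs_le.2 ⟨le_of_forall_gt fun x hx => ?_,
    h.Esq_le.trans (abs_le.1 h.abs_half_condMutualInfo_le).2⟩
  obtain ⟨d, R, hR, hlt⟩ := exists_isExtension_lt hρ hx
  exact (abs_le.1 hR.abs_half_condMutualInfo_le).1.trans_lt hlt

end SquashedEntanglement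

lemma convex_setOf_isState (n : Type*) [Fintype n] : Convex ℝ {ρ : Matrix n n ℂ | IsState ρ} := by
  rintro ρ ⟨hρ, hρ1⟩ σ ⟨hσ, hσ1⟩ a b ha hb hab
  refine ⟨(hρ.smul ha).add (hσ.smul hb), ?_⟩
  rw [trace_add, trace_smul, trace_smul, hρ1, hσ1, ← add_smul, hab, one_smul]

-- The environment of the mixed extension carries a flag telling which of the two states occurs.
lemma convexOn_Esq {A B : Type*} [Fintype A] [Fintype B] :
    ConvexOn ℝ {ρ : Matrix (A × B) (A × B) ℂ | IsState ρ} Esq := by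
  refine ⟨convex_setOf_isState _, fun ρ hρ σ hσ a b ha hb hab =>
    le_of_forall_pos_le_add fun ε hε => ?_⟩
  obtain ⟨d, R, hR, hRlt⟩ := exists_isExtension_lt hρ (lt_add_of_pos_right (Esq ρ) hε)
  obtain ⟨k, T, hT, hTlt⟩ := exists_isExtension_lt hσ (lt_add_of_pos_right (Esq σ) hε)
  calc Esq (a • ρ + b • σ)
      ≤ 1 / 2 * condMutualInfo (extSum (a • R) (b • T)) :=
        (hR.convexCombination hT ha hb hab).Esq_le
    _ = a * (1 / 2 * condMutualInfo R) + b * (1 / 2 * condMutualInfo T) := by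
        rw [condMutualInfo_extSum (hR.1.1.smul ha) (hT.1.1.smul hb),
          condMutualInfo_smul hR.1.1.isHermitian, condMutualInfo_smul hT.1.1.isHermitian]
        ring
    _ ≤ a * (Esq ρ + ε) + b * (Esq σ + ε) := by gcongr
    _ = a • Esq ρ + b • Esq σ + ε := by
        rw [smul_eq_mul, smul_eq_mul]
        linear_combination ε * hab

section OrderInterval

open scoped MatrixOrder

variable {n : Type*} [Fintype n]

lemma abs_eigenvalues_le_traceNorm {X : Matrix n n ℂ} (hX : X.IsHermitian) (i : n) :
    |hX.eigenvalues i| ≤ traceNorm X := by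
  rw [traceNorm, dif_pos hX]
  exact Finset.single_le_sum (f := fun j => |hX.eigenvalues j|) (fun _ _ => abs_nonneg _)
    (Finset.mem_univ i)

lemma le_algebraMap_of_traceNorm_le {X : Matrix n n ℂ} (hX : X.IsHermitian) {t : ℝ}
    (ht : traceNorm X ≤ t) : X ≤ algebraMap ℝ _ t := by
  rw [le_algebraMap_iff_spectrum_le hX.isSelfAdjoint, hX.spectrum_real_eq_range_eigenvalues]
  rintro _ ⟨i, rfl⟩
  exact (le_abs_self _).trans ((abs_eigenvalues_le_traceNorm hX i).trans ht)

lemma neg_algebraMap_le_of_traceNorm_le {X : Matrix n n ℂ} (hX : X.IsHermitian) {t : ℝ}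
    (ht : traceNorm X ≤ t) : -algebraMap ℝ _ t ≤ X := by
  rw [← map_neg, algebraMap_le_iff_le_spectrum hX.isSelfAdjoint,
    hX.spectrum_real_eq_range_eigenvalues]
  rintro _ ⟨i, rfl⟩
  exact neg_le_of_abs_le ((abs_eigenvalues_le_traceNorm hX i).trans ht)

lemma exists_pos_algebraMap_le [Nonempty n] {ρ : Matrix n n ℂ} (hρ : ρ.PosDef) :
    ∃ μ > (0 : ℝ), algebraMap ℝ _ μ ≤ ρ := by
  rw [CFC.exists_pos_algebraMap_le_iff hρ.isHermitian.isSelfAdjoint,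
    hρ.isHermitian.spectrum_real_eq_range_eigenvalues]
  rintro _ ⟨i, rfl⟩
  exact hρ.eigenvalues_pos i

lemma IsState.nonempty {ρ : Matrix n n ℂ} (hρ : IsState ρ) : Nonempty n := by
  by_contra h
  rw [not_nonempty_iff] at h
  exact one_ne_zero (hρ.2.symm.trans (trace_eq_zero_of_isEmpty ρ))

lemma exists_isState_eq_convex_combination {ρ σ : Matrix n n ℂ} (hρ : IsState ρ) (hσ : IsState σ)
    {μ t : ℝ} (ht : 0 < t) (hμ : algebraMap ℝ _ μ ≤ ρ) (h : ρ - σ ≤ algebraMap ℝ _ (t * μ)) :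
    ∃ τ, IsState τ ∧ σ = (1 - t) • ρ + t • τ := by
  refine ⟨t⁻¹ • (σ - (1 - t) • ρ), ⟨?_, ?_⟩, ?_⟩
  · have htρ : algebraMap ℝ (Matrix n n ℂ) (t * μ) ≤ t • ρ := by
      rw [map_mul, ← Algebra.smul_def]
      exact smul_le_smul_of_nonneg_left hμ ht.le
    have hle : (1 - t) • ρ ≤ σ := by
      rw [sub_smul, one_smul, sub_le_iff_le_add, ← sub_le_iff_le_add']
      exact h.trans htρ
    exact (Matrix.le_iff.1 hle).smul (inv_nonneg.2 ht.le)
  · rw [trace_smul, trace_sub, trace_smul, hρ.2, hσ.2, sub_smul, one_smul, sub_sub_cancel,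
      smul_smul, inv_mul_cancel₀ ht.ne', one_smul]
  · rw [smul_inv_smul₀ ht.ne', add_sub_cancel]

lemma sub_le_mul_of_convexOn {f : Matrix n n ℂ → ℝ} (hf : ConvexOn ℝ {ρ | IsState ρ} f) {C : ℝ}
    (hC : ∀ ρ, IsState ρ → |f ρ| ≤ C) {ρ σ : Matrix n n ℂ} (hρ : IsState ρ) (hσ : IsState σ)
    {μ t : ℝ} (ht0 : 0 < t) (ht1 : t ≤ 1) (hμ : algebraMap ℝ _ μ ≤ ρ)
    (h : ρ - σ ≤ algebraMap ℝ _ (t * μ)) : f σ - f ρ ≤ t * (2 * C) := by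
  obtain ⟨τ, hτ, rfl⟩ := exists_isState_eq_convex_combination hρ hσ ht0 hμ h
  calc f ((1 - t) • ρ + t • τ) - f ρ
      ≤ (1 - t) • f ρ + t • f τ - f ρ :=
        sub_le_sub_right (hf.2 hρ hτ (sub_nonneg.2 ht1) ht0.le (sub_add_cancel 1 t)) _
    _ = t * (f τ - f ρ) := by
        rw [smul_eq_mul, smul_eq_mul]
        ring
    _ ≤ t * (2 * C) := by
        gcongr
        linarith [(abs_le.1 (hC τ hτ)).2, (abs_le.1 (hC ρ hρ)).1]

theorem exists_forall_traceNorm_sub_lt_of_convexOn {f : Matrix n n ℂ → ℝ}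
    (hf : ConvexOn ℝ {ρ | IsState ρ} f) {C : ℝ} (hC : ∀ ρ, IsState ρ → |f ρ| ≤ C)
    {ρ : Matrix n n ℂ} (hρ : IsState ρ) (hρpd : ρ.PosDef) {ε : ℝ} (hε : 0 < ε) :
    ∃ δ > 0, ∀ σ, IsState σ → traceNorm (ρ - σ) < δ → |f ρ - f σ| < ε := by
  have := hρ.nonempty
  obtain ⟨μ, hμ0, hμ⟩ := exists_pos_algebraMap_le hρpd
  have hC0 : 0 ≤ C := (abs_nonneg _).trans (hC ρ hρ)
  set t := min 1 (ε / (2 * C + 1))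
  have ht0 : 0 < t := by positivity
  have ht1 : t ≤ 1 := min_le_left _ _
  have htε : t * (2 * C) < ε := by
    have := (le_div_iff₀ (by positivity)).1 (min_le_right 1 (ε / (2 * C + 1)))
    linarith
  refine ⟨t * (μ / 2), by positivity, fun σ hσ hdist => ?_⟩
  have hX := hρ.1.isHermitian.sub hσ.1.isHermitian
  have hle := le_algebraMap_of_traceNorm_le hX hdist.le
  have hge := neg_le.1 (neg_algebraMap_le_of_traceNorm_le hX hdist.le)
  rw [neg_sub] at hge
  have hmono {a b : ℝ} (hab : a ≤ b) : algebraMap ℝ (Matrix n n ℂ) a ≤ algebraMap ℝ _ b :=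
    algebraMap_mono _ hab
  have hσ_half : algebraMap ℝ _ (μ / 2) ≤ σ :=
    calc algebraMap ℝ (Matrix n n ℂ) (μ / 2)
        ≤ algebraMap ℝ _ (μ - t * (μ / 2)) := hmono (by nlinarith)
      _ = algebraMap ℝ _ μ - algebraMap ℝ _ (t * (μ / 2)) := map_sub _ _ _
      _ ≤ ρ - (ρ - σ) := sub_le_sub hμ hle
      _ = σ := sub_sub_cancel ρ σ
  have hσρ := sub_le_mul_of_convexOn hf hC hρ hσ ht0 ht1 hμ (hle.trans (hmono (by nlinarith)))
  have hρσ := sub_le_mul_of_convexOn hf hC hσ hρ ht0 ht1 hσ_half hge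
  rw [abs_sub_lt_iff]
  exact ⟨hρσ.trans_lt htε, hσρ.trans_lt htε⟩

end OrderInterval

/-- Squashed entanglement is continuous on the interior of the set of states,
i.e. on the faithful (positive definite) states, with respect to the trace norm. -/
theorem squashedEntanglement_continuous_on_faithful
    {A B : Type*} [Fintype A] [Fintype B]
    (ρ : Matrix (A × B) (A × B) ℂ) (hρ : IsState ρ) (hρpd : ρ.PosDef) :
    ∀ ε > (0 : ℝ), ∃ δ > (0 : ℝ), ∀ σ : Matrix (A × B) (A × B) ℂ,
      IsState σ → σ.PosDef → traceNorm (ρ - σ) < δ → |Esq ρ - Esq σ| < ε := by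
  intro ε hε
  obtain ⟨δ, hδ, h⟩ :=
    exists_forall_traceNorm_sub_lt_of_convexOn convexOn_Esq (fun _ => abs_Esq_le) hρ hρpd hε
  exact ⟨δ, hδ, fun σ hσ _ => h σ hσ⟩

end
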